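/- Let (G,c,o) be a recurrent rooted network and h a potential on it. Then the h-process {Y_n} on S_h={v : h(v)>0} is transient, and its Green kernel G^h(x,y)=Σ_{k≥0} P^h_x(Y_k=y) satisfies G^h(x,y) = G_o(x,y) · h(y)/h(x) for all x,y ∈ S_h, where G_o is the Green kernel of the network random walk killed at o. -/

import Mathlib

open scoped ENNReal
open Filter Topology Classical
noncomputable section

/-- A rooted network: a connected, locally finite simple graph with positive
symmetric edge conductances (extended by `0` to non-edges) and a root `o`. -/
structure RootedNetwork (V : Type*) where
  G : SimpleGraph V
  locallyFinite : ∀ x : V, (G.neighborSet x).Finite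
  connected : G.Connected
  c : V → V → ℝ
  c_symm : ∀ x y, c x y = c y x
  c_pos : ∀ x y, G.Adj x y → 0 < c x y
  c_eq_zero : ∀ x y, ¬ G.Adj x y → c x y = 0
  o : V

namespace RootedNetwork

variable {V : Type*}

/-- The vertex weight `c_x = Σ_{z ∼ x} c_{xz}`. -/
noncomputable def cv (N : RootedNetwork V) (x : V) : ℝ := ∑' y, N.c x y

/-- The transition probability `p(x,y) = c_{xy} / c_x` of the network random walk. -/
noncomputable def p (N : RootedNetwork V) (x y : V) : ℝ≥0∞ :=
  ENNReal.ofReal (N.c x y / N.cv x)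

/-- The probability that the network random walk started at `x` begins with the
given finite sequence of steps. -/
noncomputable def pathProb (N : RootedNetwork V) : V → List V → ℝ≥0∞
  | _, [] => 1
  | x, y :: l => N.p x y * pathProb N y l

/-- The probability, starting from `x`, that the walk ever visits `b`
(`P_x(τ_b < ∞)`), computed by decomposing over the finite path up to the first
visit of `b`. -/
noncomputable def hitProb (N : RootedNetwork V) (x b : V) : ℝ≥0∞ :=
  if x = b then 1
  else ∑' l : {l : List V // l.getLast? = some b ∧ b ∉ l.dropLast}, N.pathProb x l.1

/-- A rooted network is recurrent if the walk started from any vertex almost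
surely visits the root `o`. -/
def Recurrent (N : RootedNetwork V) : Prop := ∀ x : V, N.hitProb x N.o = 1

/-- The Green kernel `G_o(x,y) = Σ_{n ≥ 0} P_x(X_n = y, τ_o > n)` of the walk
killed at the root, computed as a sum over finite paths from `x` to `y`
avoiding `o` (the `n = 0` term is the first summand). -/
noncomputable def GreenKer (N : RootedNetwork V) (x y : V) : ℝ≥0∞ :=
  (if x = y ∧ x ≠ N.o then 1 else 0) +
    ∑' l : {l : List V // l.getLast? = some y ∧ N.o ∉ x :: l}, N.pathProb x l.1

/-- The Green density `g_o(x,y) = G_o(x,y) / c_y`. -/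
noncomputable def greenDensity (N : RootedNetwork V) (x y : V) : ℝ≥0∞ :=
  N.GreenKer x y / ENNReal.ofReal (N.cv y)

/-- The network Laplacian `Δ f (v) = Σ_{x ∼ v} c_{vx} (f(x) - f(v))`. -/
noncomputable def lap (N : RootedNetwork V) (f : V → ℝ) (v : V) : ℝ :=
  ∑' x, N.c v x * (f x - f v)

/-- A potential: a nonnegative function vanishing at `o`, with Laplacian `1`
at `o`, harmonic everywhere else. -/
def IsPotential (N : RootedNetwork V) (h : V → ℝ) : Prop :=
  (∀ v, 0 ≤ h v) ∧ h N.o = 0 ∧ N.lap h N.o = 1 ∧ ∀ v, v ≠ N.o → N.lap h v = 0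

end RootedNetwork
namespace RootedNetwork

variable {V : Type*}

/-- The transition probability `p^h(x,y) = p(x,y) h(y) / h(x)` of the Doob
`h`-process. -/
noncomputable def hp (N : RootedNetwork V) (h : V → ℝ) (x y : V) : ℝ≥0∞ :=
  N.p x y * ENNReal.ofReal (h y / h x)

/-- The probability that the `h`-process started at `x` begins with the given
finite sequence of steps. -/
noncomputable def hPathProb (N : RootedNetwork V) (h : V → ℝ) : V → List V → ℝ≥0∞
  | _, [] => 1
  | x, y :: l => N.hp h x y * hPathProb N h y l

end RootedNetwork
namespace RootedNetwork

/-- The Green kernel `G^h(x,y) = Σ_{k ≥ 0} P^h_x(Y_k = y)` of the `h`-process,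
as a sum over finite paths from `x` to `y` (the `k = 0` term is the first
summand). -/
noncomputable def hGreen {V : Type*} (N : RootedNetwork V) (h : V → ℝ) (x y : V) : ℝ≥0∞ :=
  (if x = y then 1 else 0) +
    ∑' l : {l : List V // l.getLast? = some y}, N.hPathProb h x l.1

end RootedNetwork

/-!
*Finiteness of `G_o`.* By connectedness there is a path `m` from `y ≠ o` to `o`, of positive
probability, that meets `o` only at its end. Appending `m` to the paths from `x` to `y` avoiding
`o` gives first-passage paths to `o`. No first-passage path is a proper prefix of another, so their
probabilities sum to at most `1` (Kraft's inequality); hence `G_o(x,y) ≤ 1 + 1 / P(m)`.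

*The identity.* If `h` is nonnegative and superharmonic at `v`, then
`h(v) p^h(v,w) = p(v,w) h(w)`, even where `h(v) = 0`: a zero of `h` is then a minimum, so `h`
vanishes at all of its neighbours. This telescopes along paths avoiding `o`, and the `h`-process
never visits `o` because `h(o) = 0`.
-/

namespace RootedNetwork

variable {V : Type*} (N : RootedNetwork V)

section Transition

theorem c_nonneg (x y : V) : 0 ≤ N.c x y := by
  by_cases hxy : N.G.Adj x y
  · exact (N.c_pos x y hxy).le
  · exact (N.c_eq_zero x y hxy).ge

theorem summable_c_mul (x : V) (f : V → ℝ) : Summable fun y => N.c x y * f y := by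
  refine summable_of_hasFiniteSupport ((N.locallyFinite x).subset fun y hy => ?_)
  by_contra hxy
  exact hy (by simp [N.c_eq_zero x y hxy])

theorem summable_c (x : V) : Summable (N.c x) := by
  simpa using N.summable_c_mul x 1

theorem tsum_p_le_one (x : V) : ∑' y, N.p x y ≤ 1 := by
  have hnonneg (y : V) : 0 ≤ N.c x y / N.cv x :=
    div_nonneg (N.c_nonneg x y) (tsum_nonneg (N.c_nonneg x))
  calc ∑' y, N.p x y
      = ENNReal.ofReal (∑' y, N.c x y / N.cv x) :=
        (ENNReal.ofReal_tsum_of_nonneg hnonneg ((N.summable_c x).div_const _)).symm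
    _ = ENNReal.ofReal (N.cv x / N.cv x) := by rw [tsum_div_const, ← cv]
    _ ≤ 1 := ENNReal.ofReal_le_one.2 (div_self_le_one _)

theorem p_ne_zero_of_adj {x y : V} (hxy : N.G.Adj x y) : N.p x y ≠ 0 := by
  have hc : 0 < N.c x y := N.c_pos x y hxy
  have hcv : N.c x y ≤ N.cv x := (N.summable_c x).le_tsum y fun z _ => N.c_nonneg x z
  exact (ENNReal.ofReal_pos.2 (div_pos hc (hc.trans_le hcv))).ne'

end Transition

section PathProb

theorem pathProb_append (x : V) (l m : List V) :
    N.pathProb x (l ++ m) = N.pathProb x l * N.pathProb (l.getLastD x) m := by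
  induction l generalizing x with
  | nil => simp [pathProb]
  | cons y l ih => simp only [List.cons_append, pathProb, ih, List.getLastD_cons, mul_assoc]

theorem tsum_pathProb_le_tsum_p_mul {A : Set (List V)} (hA : [] ∉ A) (x : V) :
    ∑' l : A, N.pathProb x l ≤ ∑' y, N.p x y * ∑' l : {l | y :: l ∈ A}, N.pathProb y l := by
  let consPath : (Σ y, {l | y :: l ∈ A}) → A := fun z => ⟨z.1 :: z.2, z.2.2⟩
  have consPath_surjective : Function.Surjective consPath := by
    rintro ⟨_ | ⟨y, l⟩, hl⟩
    · exact absurd hl hA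
    · exact ⟨⟨y, l, hl⟩, rfl⟩
  calc ∑' l : A, N.pathProb x l
      ≤ ∑' z, N.pathProb x (consPath z) :=
        ENNReal.tsum_le_tsum_comp_of_surjective consPath_surjective _
    _ = ∑' y, N.p x y * ∑' l : {l | y :: l ∈ A}, N.pathProb y l := by
        simp only [ENNReal.tsum_sigma', ← ENNReal.tsum_mul_left, consPath, pathProb]

theorem tsum_pathProb_le_one_of_length_lt {n : ℕ} {A : Set (List V)}
    (hA : IsAntichain (· <+: ·) A) (hn : ∀ l ∈ A, l.length < n) (x : V) :
    ∑' l : A, N.pathProb x l ≤ 1 := by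
  induction n generalizing A x with
  | zero =>
    obtain rfl : A = ∅ := Set.eq_empty_of_forall_notMem fun l hl => Nat.not_lt_zero _ (hn l hl)
    simp
  | succ n ih =>
    by_cases hnil : [] ∈ A
    · obtain rfl : A = {[]} :=
        Set.eq_singleton_iff_unique_mem.2
          ⟨hnil, fun l hl => (hA.eq hnil hl l.nil_prefix).symm⟩
      simp [pathProb]
    have htail_antichain (y : V) : IsAntichain (· <+: ·) {l | y :: l ∈ A} :=
      hA.preimage List.cons_injective fun _ _ => (List.prefix_cons_inj y).2
    have htail (y : V) : ∑' l : {l | y :: l ∈ A}, N.pathProb y l ≤ 1 :=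
      ih (htail_antichain y) (fun l hl => Nat.lt_of_succ_lt_succ (hn (y :: l) hl)) y
    calc ∑' l : A, N.pathProb x l
        ≤ ∑' y, N.p x y * ∑' l : {l | y :: l ∈ A}, N.pathProb y l :=
          N.tsum_pathProb_le_tsum_p_mul hnil x
      _ ≤ ∑' y, N.p x y := ENNReal.tsum_le_tsum fun y => mul_le_of_le_one_right' (htail y)
      _ ≤ 1 := N.tsum_p_le_one x

theorem tsum_pathProb_le_one {A : Set (List V)} (hA : IsAntichain (· <+: ·) A) (x : V) :
    ∑' l : A, N.pathProb x l ≤ 1 := by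
  refine ENNReal.summable.tsum_le_of_sum_le fun s => ?_
  let B : Finset (List V) := s.map (Function.Embedding.subtype _)
  have hBA : (B : Set (List V)) ⊆ A := by simp [B]
  have hlength (l) (hl : l ∈ B) : l.length < B.sup List.length + 1 :=
    Nat.lt_succ_of_le (Finset.le_sup (f := List.length) hl)
  calc ∑ l ∈ s, N.pathProb x l = ∑ l ∈ B, N.pathProb x l := by simp [B]
    _ = ∑' l : (B : Set (List V)), N.pathProb x l := (Finset.tsum_subtype' B _).symm
    _ ≤ 1 := N.tsum_pathProb_le_one_of_length_lt (hA.subset hBA) hlength x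

end PathProb

section FirstPassage

/-- The paths that visit `b` at their last step and at no earlier step. As in `pathProb`, a path is
the list of its steps, without its starting point, so a visit to `b` at time `0` is disregarded. -/
def firstPassagePaths (b : V) : Set (List V) :=
  {l | l.getLast? = some b ∧ b ∉ l.dropLast}

theorem isAntichain_firstPassagePaths (b : V) :
    IsAntichain (· <+: ·) (firstPassagePaths b) := by
  rintro l ⟨hl, -⟩ _ ⟨-, hm⟩ hne ⟨t, rfl⟩
  have ht : t ≠ [] := by
    rintro rfl
    exact hne l.append_nil.symm
  rw [List.dropLast_append_of_ne_nil ht] at hm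
  exact hm (List.mem_append_left _ (List.mem_of_getLast? hl))

theorem append_mem_firstPassagePaths {b : V} {l m : List V} (hl : b ∉ l)
    (hm : m ∈ firstPassagePaths b) : l ++ m ∈ firstPassagePaths b := by
  have hne : m ≠ [] := by
    rintro rfl
    simp [firstPassagePaths] at hm
  refine ⟨by simp [List.getLast?_append, hm.1], ?_⟩
  rw [List.dropLast_append_of_ne_nil hne, List.mem_append]
  exact not_or.2 ⟨hl, hm.2⟩

theorem exists_mem_firstPassagePaths_pathProb_ne_zero {x b : V} (hxb : x ≠ b) :
    ∃ l ∈ firstPassagePaths b, N.pathProb x l ≠ 0 := by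
  obtain ⟨walk⟩ := N.connected.preconnected x b
  induction walk with
  | nil => exact absurd rfl hxb
  | @cons x y b hxy _ ih =>
    have hp : N.p x y ≠ 0 := N.p_ne_zero_of_adj hxy
    rcases eq_or_ne y b with rfl | hyb
    · exact ⟨[y], by simp [firstPassagePaths], by simpa [pathProb] using hp⟩
    · obtain ⟨l, hl, hprob⟩ := ih hyb
      exact ⟨y :: l, append_mem_firstPassagePaths (l := [y]) (by simpa using hyb.symm) hl,
        mul_ne_zero hp hprob⟩

end FirstPassage

section GreenKernel

theorem tsum_pathProb_avoiding_mul_le_one {m : List V} (hm : m ∈ firstPassagePaths N.o)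
    (x y : V) :
    (∑' l : {l : List V // l.getLast? = some y ∧ N.o ∉ x :: l}, N.pathProb x l.1) *
      N.pathProb y m ≤ 1 := by
  let appendPath : {l : List V // l.getLast? = some y ∧ N.o ∉ x :: l} → firstPassagePaths N.o :=
    fun l => ⟨l.1 ++ m, append_mem_firstPassagePaths (List.not_mem_of_not_mem_cons l.2.2) hm⟩
  have appendPath_injective : Function.Injective appendPath := fun l l' hll' =>
    Subtype.ext (List.append_cancel_right (congrArg Subtype.val hll'))
  have pathProb_appendPath (l) :
      N.pathProb x (appendPath l) = N.pathProb x l.1 * N.pathProb y m := by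
    rw [N.pathProb_append, List.getLastD_eq_getLast?, l.2.1, Option.getD_some]
  calc _ = ∑' l, N.pathProb x (appendPath l) := by
        simp only [pathProb_appendPath, ENNReal.tsum_mul_right]
    _ ≤ ∑' l : firstPassagePaths N.o, N.pathProb x l :=
        ENNReal.tsum_comp_le_tsum_of_injective appendPath_injective _
    _ ≤ 1 := N.tsum_pathProb_le_one (isAntichain_firstPassagePaths N.o) x

theorem greenKer_ne_top (x y : V) : N.GreenKer x y ≠ ⊤ := by
  refine ENNReal.add_ne_top.2 ⟨by split_ifs <;> simp, ?_⟩
  rcases eq_or_ne y N.o with rfl | hy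
  · have : IsEmpty {l : List V // l.getLast? = some N.o ∧ N.o ∉ x :: l} :=
      ⟨fun l => l.2.2 (List.mem_cons_of_mem _ (List.mem_of_getLast? l.2.1))⟩
    simp
  · obtain ⟨m, hm, hprob⟩ := N.exists_mem_firstPassagePaths_pathProb_ne_zero hy
    intro htop
    have hle := N.tsum_pathProb_avoiding_mul_le_one hm x y
    rw [htop, ENNReal.top_mul hprob] at hle
    exact ENNReal.one_ne_top (top_le_iff.1 hle)

end GreenKernel

section HTransform

variable {N} {h : V → ℝ}

theorem p_eq_zero_of_lap_nonpos (hnonneg : ∀ v, 0 ≤ h v) {v w : V} (hlap : N.lap h v ≤ 0)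
    (hv : h v = 0) (hw : h w ≠ 0) : N.p v w = 0 := by
  have hterm (x : V) : 0 ≤ N.c v x * (h x - h v) := by
    rw [hv, sub_zero]
    exact mul_nonneg (N.c_nonneg v x) (hnonneg x)
  have hle : N.c v w * (h w - h v) ≤ 0 :=
    ((N.summable_c_mul v _).le_tsum w fun x _ => hterm x).trans hlap
  have hc : N.c v w = 0 := by simpa [hv, hw] using hle.antisymm (hterm w)
  simp [p, hc]

theorem ofReal_mul_hp (hnonneg : ∀ v, 0 ≤ h v) {v : V} (hlap : N.lap h v ≤ 0) (w : V) :
    ENNReal.ofReal (h v) * N.hp h v w = N.p v w * ENNReal.ofReal (h w) := by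
  by_cases hv : h v = 0
  · by_cases hw : h w = 0
    · simp [hv, hw]
    · simp [hv, p_eq_zero_of_lap_nonpos hnonneg hlap hv hw]
  · rw [hp, mul_left_comm, ← ENNReal.ofReal_mul (hnonneg v), mul_div_cancel₀ _ hv]

theorem ofReal_mul_hPathProb (hnonneg : ∀ v, 0 ≤ h v) {x : V} {l : List V}
    (hlap : ∀ v ∈ x :: l, N.lap h v ≤ 0) :
    ENNReal.ofReal (h x) * N.hPathProb h x l =
      N.pathProb x l * ENNReal.ofReal (h (l.getLastD x)) := by
  induction l generalizing x with
  | nil => simp [hPathProb, pathProb]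
  | cons y l ih =>
    obtain ⟨hlap_x, hlap_yl⟩ := List.forall_mem_cons.1 hlap
    rw [hPathProb, pathProb, ← mul_assoc, ofReal_mul_hp hnonneg hlap_x, mul_assoc, ih hlap_yl,
      List.getLastD_cons, mul_assoc]

theorem hPathProb_eq_pathProb_mul (hnonneg : ∀ v, 0 ≤ h v) {x y : V} (hx : 0 < h x) {l : List V}
    (hlap : ∀ v ∈ x :: l, N.lap h v ≤ 0) (hl : l.getLast? = some y) :
    N.hPathProb h x l = N.pathProb x l * ENNReal.ofReal (h y / h x) := by
  have hlast : l.getLastD x = y := by rw [List.getLastD_eq_getLast?, hl, Option.getD_some]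
  rw [ENNReal.ofReal_div_of_pos hx, ← mul_div_assoc,
    ENNReal.eq_div_iff (ENNReal.ofReal_pos.2 hx).ne' ENNReal.ofReal_ne_top,
    ofReal_mul_hPathProb hnonneg hlap, hlast]

theorem hPathProb_eq_zero_of_mem {v : V} (hv : h v = 0) {l : List V} (hl : v ∈ l) (x : V) :
    N.hPathProb h x l = 0 := by
  induction l generalizing x with
  | nil => simp at hl
  | cons y l ih =>
    rcases List.mem_cons.1 hl with rfl | hl
    · simp [hPathProb, hp, hv]
    · simp [hPathProb, ih hl]

theorem tsum_hPathProb_eq_tsum_avoiding (hroot : h N.o = 0) {x : V} (hx : x ≠ N.o) (y : V) :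
    ∑' l : {l : List V // l.getLast? = some y}, N.hPathProb h x l.1 =
      ∑' l : {l : List V // l.getLast? = some y ∧ N.o ∉ x :: l}, N.hPathProb h x l.1 := by
  refine ((Subtype.map_injective (fun _ hl => hl.1) Function.injective_id).tsum_eq
    fun l hl => ?_).symm
  have hmem : N.o ∉ l.1 := fun ho => hl (hPathProb_eq_zero_of_mem hroot ho x)
  exact ⟨⟨l.1, l.2, List.not_mem_cons_of_ne_of_not_mem hx.symm hmem⟩, rfl⟩

theorem hGreen_eq_greenKer_mul (hnonneg : ∀ v, 0 ≤ h v) (hroot : h N.o = 0)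
    (hlap : ∀ v, v ≠ N.o → N.lap h v ≤ 0) {x : V} (hx : 0 < h x) (y : V) :
    N.hGreen h x y = N.GreenKer x y * ENNReal.ofReal (h y / h x) := by
  have hxo : x ≠ N.o := by
    rintro rfl
    exact hx.ne' hroot
  rw [hGreen, GreenKer, add_mul, ← ENNReal.tsum_mul_right,
    tsum_hPathProb_eq_tsum_avoiding hroot hxo]
  congr 1
  · rcases eq_or_ne x y with rfl | hxy
    · simp [hxo, hx.ne']
    · simp [hxy]
  · exact tsum_congr fun l => hPathProb_eq_pathProb_mul hnonneg hx
      (fun v hv => hlap v (ne_of_mem_of_not_mem hv l.2.2)) l.2.1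

end HTransform

end RootedNetwork

theorem hProcess_transient_green_general {V : Type*} (N : RootedNetwork V) (h : V → ℝ)
    (hnonneg : ∀ v, 0 ≤ h v) (hroot : h N.o = 0) (hlap : ∀ v, v ≠ N.o → N.lap h v ≤ 0)
    {x : V} (hx : 0 < h x) (y : V) :
    N.hGreen h x y ≠ ⊤ ∧
      N.hGreen h x y = N.GreenKer x y * ENNReal.ofReal (h y / h x) := by
  have hgreen := RootedNetwork.hGreen_eq_greenKer_mul hnonneg hroot hlap hx y
  refine ⟨?_, hgreen⟩
  rw [hgreen]
  exact ENNReal.mul_ne_top (N.greenKer_ne_top x y) ENNReal.ofReal_ne_top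

/-- On a recurrent rooted network, the Doob `h`-process of a potential `h` is
transient (its Green kernel is finite at every pair of states of
`S_h = {v : h(v) > 0}`), and its Green kernel satisfies
`G^h(x,y) = G_o(x,y) · h(y)/h(x)`. -/
theorem hProcess_transient_green {V : Type*} (N : RootedNetwork V)
    (hrec : N.Recurrent) (h : V → ℝ) (hpot : N.IsPotential h) :
    (∀ x y : V, 0 < h x → 0 < h y → N.hGreen h x y ≠ ⊤) ∧
    (∀ x y : V, 0 < h x → 0 < h y →
      N.hGreen h x y = N.GreenKer x y * ENNReal.ofReal (h y / h x)) := by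
  have hgreen {x : V} := hProcess_transient_green_general N h hpot.1 hpot.2.1
    (fun v hv => (hpot.2.2.2 v hv).le) (x := x)
  exact ⟨fun _ y hx _ => (hgreen hx y).1, fun _ y hx _ => (hgreen hx y).2⟩
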